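/- Let a ∈ (−1, 0) and let W : ℝ → ℝ be continuous and satisfy the left logarithmic growth condition, and let X̃(W) denote the unique continuous solution of X̃(s) − X̃(t) = a ∫_t^s X̃(u−1) du + W(s) − W(t) (t ≤ s) with limsup_{v→−∞} |X̃(v)| < ∞. Then: (i) for every v ∈ ℝ the shifted path W(·+v) is continuous and satisfies the left logarithmic growth condition, and X̃(W)(s+v) = X̃(W(·+v))(s) for all s ∈ ℝ; and (ii) for every x ∈ ℝ, X̃(W + x·𝟙) = X̃(W), where 𝟙 denotes the constant function equal to one. -/

import Mathlib

/-!
The delay equation determines its solution up to a solution `Z` of the homogeneous equation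
`Z' = -b Z(· - 1)`, where `b = -a ∈ (0, 1)`, so both identities follow once such a `Z` that is
bounded near `-∞` is known to vanish: a shifted solution solves the equation driven by the shifted
path, and adding a constant to `W` does not change the increments of `W`.

For the vanishing, suppose `|Z| ≤ N` on `(-∞, T]`. Writing
`Z' + b Z = b (Z - Z(· - 1))` and bounding `|Z(s) - Z(s - 1)| ≤ b N` by the equation itself, the
variation of constants formula gives `|Z| ≤ b N` on `(-∞, T]` (`delay_contract`). Since `b < 1`,
iteration gives `Z = 0` on `(-∞, T]`, and the integral equation propagates this to the right in
steps of length one (`delay_eq_zero`). The negative sign of `a` matters: for `a > 0` there is a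
nonzero solution `exp (l s)` with `l = a exp (-l) > 0`.

For the growth condition of `W(· + v)`, the integer shifts are handled first
(`LeftLogGrowth.natShift`), where finitely many cells are not covered by the hypothesis and are
controlled by compactness. A unit interval ending at `v - k` meets at most two consecutive cells
of a suitable integer grid, and `log (k + c) ≤ const * log (k + 2)` absorbs the change of index.
-/

open MeasureTheory Set Filter

/-- The left logarithmic growth condition. -/
def LeftLogGrowth (W : ℝ → ℝ) : Prop :=
  ∃ C > (0 : ℝ), ∀ k : ℕ, ∀ v ∈ Set.Icc (-1 : ℝ) 0,
    |W (v - (k : ℝ)) - W (-(k : ℝ) - 1)| ≤ C * Real.sqrt (Real.log ((k : ℝ) + 2))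

/-- `X` is a two-sided solution of the delay equation `dX_s = a X_{s-1} ds + dW_s`
which stays bounded near `-∞`. -/
def IsSolDelay (a : ℝ) (W : ℝ → ℝ) (X : ℝ → ℝ) : Prop :=
  Continuous X ∧
  (∀ t s : ℝ, t ≤ s → X s - X t = a * (∫ u in t..s, X (u - 1)) + (W s - W t)) ∧
  (∃ M : ℝ, ∀ᶠ v in Filter.atBot, |X v| ≤ M)

/-- The homogeneous integral equation in differential form. -/
lemma delay_hasDerivAt {a : ℝ} {Z : ℝ → ℝ} (hZ : Continuous Z)
    (h : ∀ t s : ℝ, t ≤ s → Z s - Z t = a * ∫ u in t..s, Z (u - 1)) (s : ℝ) :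
    HasDerivAt Z (a * Z (s - 1)) s := by
  have hc : Continuous fun u => Z (u - 1) := by fun_prop
  have hrep : Z = fun r => Z 0 + a * ∫ u in (0 : ℝ)..r, Z (u - 1) := by
    funext r
    rcases le_total 0 r with hr | hr
    · linarith [h 0 r hr]
    · have := h r 0 hr
      rw [intervalIntegral.integral_symm]
      linarith
  have key := ((hc.integral_hasStrictDerivAt 0 s).hasDerivAt.const_mul a).const_add (Z 0)
  rwa [← hrep] at key

/-- One-sided version of the contraction; the other side follows by applying it to `-Z`. -/
lemma delay_contract_aux {b T N : ℝ} (hb : 0 < b) {Z : ℝ → ℝ} (hZ : Continuous Z)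
    (h : ∀ t s : ℝ, t ≤ s → Z s - Z t = -b * ∫ u in t..s, Z (u - 1))
    (hN : ∀ s ≤ T, |Z s| ≤ N) : ∀ s ≤ T, Z s ≤ b * N := by
  have hder := delay_hasDerivAt hZ h
  have hstep : ∀ s ≤ T, Z s - Z (s - 1) ≤ b * N := by
    intro s hs
    have h1 : ‖∫ u in (s - 1)..s, Z (u - 1)‖ ≤ N * |s - (s - 1)| := by
      apply intervalIntegral.norm_integral_le_of_norm_le_const
      intro u hu
      rw [Set.uIoc_of_le (by linarith)] at hu
      exact hN _ (by linarith [hu.2])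
    have h2 : |s - (s - 1)| = 1 := by norm_num
    rw [h2, mul_one, Real.norm_eq_abs] at h1
    rw [h _ _ (by linarith)]
    nlinarith [(abs_le.mp h1).1]
  -- The error in the variation of constants formula, up to the factor `exp (b s)`, is monotone.
  have hg : ∀ s, HasDerivAt (fun s => Real.exp (b * s) * (b * N - Z s))
      (Real.exp (b * s) * b * (b * N - Z s) + Real.exp (b * s) * (-(-b * Z (s - 1)))) s := by
    intro s
    have he : HasDerivAt (fun s => Real.exp (b * s)) (Real.exp (b * s) * b) s := by
      simpa using ((hasDerivAt_id s).const_mul b).exp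
    exact he.mul ((hder s).const_sub (b * N))
  have hmono : MonotoneOn (fun s => Real.exp (b * s) * (b * N - Z s)) (Set.Iic T) := by
    apply monotoneOn_of_deriv_nonneg (convex_Iic T)
    · exact fun s _ => (hg s).continuousAt.continuousWithinAt
    · exact fun s _ => (hg s).differentiableAt.differentiableWithinAt
    · intro s hs
      rw [interior_Iic] at hs
      rw [(hg s).deriv]
      have h1 := hstep s (le_of_lt hs)
      have h2 : 0 ≤ Real.exp (b * s) * b * (b * N - (Z s - Z (s - 1))) :=
        mul_nonneg (by positivity) (by linarith)
      linarith
  intro s hs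
  have hexp : Tendsto (fun t => Real.exp (b * t) * (b * N - N)) atBot (nhds (0 * (b * N - N))) :=
    (Real.tendsto_exp_atBot.comp (tendsto_id.const_mul_atBot hb)).mul_const _
  rw [zero_mul] at hexp
  have hfin : 0 ≤ Real.exp (b * s) * (b * N - Z s) := by
    apply le_of_tendsto hexp
    filter_upwards [eventually_le_atBot s] with t ht
    refine le_trans ?_ (hmono (ht.trans hs : t ∈ Set.Iic T) hs ht)
    have := (abs_le.mp (hN t (ht.trans hs))).2
    exact mul_le_mul_of_nonneg_left (by linarith) (Real.exp_pos _).le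
  linarith [nonneg_of_mul_nonneg_right hfin (Real.exp_pos _)]

lemma delay_contract {b T N : ℝ} (hb : 0 < b) {Z : ℝ → ℝ} (hZ : Continuous Z)
    (h : ∀ t s : ℝ, t ≤ s → Z s - Z t = -b * ∫ u in t..s, Z (u - 1))
    (hN : ∀ s ≤ T, |Z s| ≤ N) : ∀ s ≤ T, |Z s| ≤ b * N := by
  intro s hs
  have h1 := delay_contract_aux hb hZ h hN s hs
  have h2 := delay_contract_aux (Z := fun s => -Z s) hb hZ.neg
    (by intro t s hts; rw [intervalIntegral.integral_neg]; linarith [h t s hts])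
    (by simpa using hN) s hs
  exact abs_le.mpr ⟨by linarith, h1⟩

lemma delay_eq_zero {a : ℝ} (ha : a ∈ Set.Ioo (-1 : ℝ) 0) {Z : ℝ → ℝ} (hZ : Continuous Z)
    (h : ∀ t s : ℝ, t ≤ s → Z s - Z t = a * ∫ u in t..s, Z (u - 1))
    (hbd : ∃ M : ℝ, ∀ᶠ v in atBot, |Z v| ≤ M) (s : ℝ) : Z s = 0 := by
  obtain ⟨M, hM⟩ := hbd
  obtain ⟨T, hT⟩ := eventually_atBot.mp hM
  have hiter : ∀ n : ℕ, ∀ s ≤ T, |Z s| ≤ (-a) ^ n * M := by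
    intro n
    induction n with
    | zero => simpa using hT
    | succ n ih =>
      have := delay_contract (b := -a) (by linarith [ha.2]) hZ (by simpa using h) ih
      intro s hs
      rw [pow_succ']
      linarith [this s hs]
  have h0 : ∀ s ≤ T, Z s = 0 := by
    intro s hs
    have hlim : Tendsto (fun n : ℕ => (-a) ^ n * M) atTop (nhds (0 * M)) :=
      (tendsto_pow_atTop_nhds_zero_of_lt_one (by linarith [ha.2]) (by linarith [ha.1])).mul_const M
    have := ge_of_tendsto' hlim (fun n => hiter n s hs)
    rw [zero_mul] at this
    exact abs_nonpos_iff.mp this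
  have hprop : ∀ n : ℕ, ∀ s ≤ T + n, Z s = 0 := by
    intro n
    induction n with
    | zero => simpa using h0
    | succ n ih =>
      intro s hs
      push_cast at hs
      rcases le_total s (T + n) with hle | hle
      · exact ih s hle
      · have h1 := h (T + n) s hle
        have h2 : ∫ u in (T + n)..s, Z (u - 1) = ∫ u in (T + n)..s, (0 : ℝ) := by
          apply intervalIntegral.integral_congr
          intro u hu
          rw [Set.uIcc_of_le hle] at hu
          exact ih _ (by linarith [hu.2])
        rw [h2, ih _ le_rfl] at h1
        simpa using h1
  obtain ⟨n, hn⟩ := exists_nat_ge (s - T)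
  exact hprop n s (by linarith)

lemma IsSolDelay.unique {a : ℝ} (ha : a ∈ Set.Ioo (-1 : ℝ) 0) {W X Y : ℝ → ℝ}
    (hX : IsSolDelay a W X) (hY : IsSolDelay a W Y) (s : ℝ) : X s = Y s := by
  obtain ⟨hXc, hXe, M₁, hM₁⟩ := hX
  obtain ⟨hYc, hYe, M₂, hM₂⟩ := hY
  have := delay_eq_zero ha (Z := fun s => X s - Y s) (hXc.sub hYc)
    (by
      intro t s hts
      rw [intervalIntegral.integral_sub]
      · linarith [hXe t s hts, hYe t s hts]
      · exact Continuous.intervalIntegrable (by fun_prop) _ _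
      · exact Continuous.intervalIntegrable (by fun_prop) _ _)
    ⟨M₁ + M₂, by
      filter_upwards [hM₁, hM₂] with v h1 h2
      exact (abs_sub _ _).trans (add_le_add h1 h2)⟩ s
  linarith

lemma IsSolDelay.shift {a : ℝ} {W X : ℝ → ℝ} (hX : IsSolDelay a W X) (v : ℝ) :
    IsSolDelay a (fun s => W (s + v)) (fun s => X (s + v)) := by
  obtain ⟨hc, he, M, hM⟩ := hX
  refine ⟨by fun_prop, ?_, M, (tendsto_atBot_add_const_right _ v tendsto_id).eventually hM⟩
  intro t s hts
  have h1 := he (t + v) (s + v) (by linarith)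
  rw [← intervalIntegral.integral_comp_add_right (fun u => X (u - 1))] at h1
  simp only [h1, sub_add_eq_add_sub]

/-- Shifts by natural numbers keep the growth condition: the first `n` cells are controlled by
compactness, the others by the hypothesis at an index reduced by `n`. -/
lemma LeftLogGrowth.natShift {W : ℝ → ℝ} (hW : Continuous W) (h : LeftLogGrowth W) (n : ℕ) :
    LeftLogGrowth (fun s => W (s + n)) := by
  obtain ⟨C, hC, h⟩ := h
  obtain ⟨B, hB⟩ := (isCompact_Icc (a := (-1 : ℝ)) (b := n)).exists_bound_of_continuousOn
    hW.continuousOn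
  simp only [Real.norm_eq_abs] at hB
  have hB0 : 0 ≤ B := (abs_nonneg _).trans (hB (-1) ⟨le_rfl, by linarith [n.cast_nonneg (α := ℝ)]⟩)
  have hL : 0 < Real.sqrt (Real.log 2) := Real.sqrt_pos.mpr (Real.log_pos (by norm_num))
  refine ⟨C + 2 * B / Real.sqrt (Real.log 2), by positivity, ?_⟩
  rintro m v ⟨hv1, hv2⟩
  have hm0 : (0 : ℝ) ≤ m := m.cast_nonneg
  rcases lt_or_ge m n with hmn | hmn
  · have hmn' : (m : ℝ) + 1 ≤ n := by exact_mod_cast hmn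
    have hlow : Real.sqrt (Real.log 2) ≤ Real.sqrt (Real.log ((m : ℝ) + 2)) :=
      Real.sqrt_le_sqrt (Real.log_le_log (by norm_num) (by linarith))
    have h1 := hB (v - m + n) ⟨by linarith, by linarith⟩
    have h2 := hB (-m - 1 + n) ⟨by linarith, by linarith⟩
    calc |W (v - m + n) - W (-m - 1 + n)| ≤ 2 * B := by
          refine (abs_sub _ _).trans ?_
          linarith
      _ = 2 * B / Real.sqrt (Real.log 2) * Real.sqrt (Real.log 2) := by field_simp
      _ ≤ 2 * B / Real.sqrt (Real.log 2) * Real.sqrt (Real.log ((m : ℝ) + 2)) := by gcongr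
      _ ≤ _ := by
          gcongr
          linarith
  · have h1 := h (m - n) v ⟨hv1, hv2⟩
    rw [Nat.cast_sub hmn] at h1
    have hmn' : (n : ℝ) ≤ m := by exact_mod_cast hmn
    have e1 : v - m + n = v - ((m : ℝ) - n) := by ring
    have e2 : -(m : ℝ) - 1 + n = -((m : ℝ) - n) - 1 := by ring
    beta_reduce
    rw [e1, e2]
    refine h1.trans ?_
    have hn0 : (0 : ℝ) ≤ n := n.cast_nonneg
    have hlow : Real.sqrt (Real.log ((m : ℝ) - n + 2)) ≤ Real.sqrt (Real.log ((m : ℝ) + 2)) :=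
      Real.sqrt_le_sqrt (Real.log_le_log (by linarith) (by linarith))
    have : 0 ≤ 2 * B / Real.sqrt (Real.log 2) := by positivity
    gcongr
    linarith

lemma LeftLogGrowth.shift {W : ℝ → ℝ} (hW : Continuous W) (h : LeftLogGrowth W) (v : ℝ) :
    LeftLogGrowth (fun s => W (s + v)) := by
  obtain ⟨n, hn⟩ := exists_nat_ge |v|
  obtain ⟨hv1, hv2⟩ := abs_le.mp hn
  have hn0 : (0 : ℝ) ≤ n := n.cast_nonneg
  obtain ⟨D, hD, hcell⟩ := h.natShift hW n
  simp only at hcell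
  have hL : 0 < Real.log 2 := Real.log_pos (by norm_num)
  have hL2 : 0 ≤ Real.log (2 * n + 2) := Real.log_nonneg (by linarith)
  refine ⟨3 * D * Real.sqrt (1 + Real.log (2 * n + 2) / Real.log 2), by positivity, ?_⟩
  rintro k u ⟨hu1, hu2⟩
  have hk0 : (0 : ℝ) ≤ k := k.cast_nonneg
  set S := Real.sqrt (Real.log ((k : ℝ) + (2 * n + 1) + 2)) with hS
  -- Any point of `[v - k - 1, v - k]` lies in a cell of index at most `k + 2 n + 1`.
  have hmon : ∀ m : ℕ, (m : ℝ) ≤ k + (2 * n + 1) →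
      D * Real.sqrt (Real.log ((m : ℝ) + 2)) ≤ D * S := by
    intro m hm
    have hm0 : (0 : ℝ) ≤ m := m.cast_nonneg
    exact mul_le_mul_of_nonneg_left
      (Real.sqrt_le_sqrt (Real.log_le_log (by linarith) (by linarith))) hD.le
  have hpt : ∀ (m : ℕ) (x : ℝ), (m : ℝ) ≤ k + (2 * n + 1) → (m : ℝ) ≤ n - x → n - x ≤ m + 1 →
      |W x - W (n - m - 1)| ≤ D * S := by
    intro m x hm h1 h2
    have := hcell m (x - n + m) ⟨by linarith, by linarith⟩
    have e1 : x - n + m - m + n = x := by ring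
    have e2 : -(m : ℝ) - 1 + n = n - m - 1 := by ring
    rw [e1, e2] at this
    exact this.trans (hmon m hm)
  have hmain : ∀ p q : ℝ, q ≤ p → p ≤ q + 1 → v - k - 1 ≤ q → p ≤ v - k →
      |W p - W q| ≤ 3 * D * S := by
    intro p q hqp hpq hq hp
    have hp0 : 0 ≤ n - p := by linarith
    have hq0 : 0 ≤ n - q := by linarith
    have hp1 := Nat.floor_le hp0
    have hp2 := (Nat.lt_floor_add_one (n - p : ℝ)).le
    have hq1 := Nat.floor_le hq0
    have hq2 := (Nat.lt_floor_add_one (n - q : ℝ)).le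
    have hle : ⌊(n - p : ℝ)⌋₊ ≤ ⌊(n - q : ℝ)⌋₊ := Nat.floor_mono (by linarith)
    have hle' : ⌊(n - q : ℝ)⌋₊ ≤ ⌊(n - p : ℝ)⌋₊ + 1 := by
      rw [← Nat.floor_add_one hp0]
      exact Nat.floor_mono (by linarith)
    generalize ⌊(n - p : ℝ)⌋₊ = i at *
    generalize ⌊(n - q : ℝ)⌋₊ = j at *
    have hi := hpt i p (by linarith) hp1 hp2
    have hj := hpt j q (by linarith) hq1 hq2
    have hDS : 0 ≤ D * S := by positivity
    rw [abs_le] at hi hj ⊢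
    obtain rfl | rfl : j = i ∨ j = i + 1 := by omega
    · constructor <;> linarith [hi.1, hi.2, hj.1, hj.2]
    · -- Consecutive cells: compare the two left endpoints inside the cell `i + 1`.
      have hij := hpt (i + 1) (n - i - 1) (by linarith) (by push_cast; linarith)
        (by push_cast; linarith)
      rw [abs_le] at hij
      constructor <;> linarith [hi.1, hi.2, hj.1, hj.2, hij.1, hij.2]
  have hfin := hmain (u - k + v) (-k - 1 + v) (by linarith) (by linarith) (by linarith)
    (by linarith)
  have hSle : S ≤ Real.sqrt (1 + Real.log (2 * n + 2) / Real.log 2) *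
      Real.sqrt (Real.log ((k : ℝ) + 2)) := by
    rw [hS, ← Real.sqrt_mul (by positivity)]
    apply Real.sqrt_le_sqrt
    have hk2 : Real.log 2 ≤ Real.log ((k : ℝ) + 2) := Real.log_le_log (by norm_num) (by linarith)
    calc Real.log ((k : ℝ) + (2 * n + 1) + 2) ≤ Real.log (((k : ℝ) + 2) * (2 * n + 2)) :=
          Real.log_le_log (by linarith) (by nlinarith [mul_nonneg hk0 hn0])
      _ = Real.log ((k : ℝ) + 2) + Real.log (2 * n + 2) / Real.log 2 * Real.log 2 := by
          rw [Real.log_mul (by positivity) (by positivity)]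
          field_simp
      _ ≤ Real.log ((k : ℝ) + 2) +
          Real.log (2 * n + 2) / Real.log 2 * Real.log ((k : ℝ) + 2) := by gcongr
      _ = _ := by ring
  calc _ ≤ 3 * D * S := hfin
    _ ≤ 3 * D * (Real.sqrt (1 + Real.log (2 * n + 2) / Real.log 2) *
      Real.sqrt (Real.log ((k : ℝ) + 2))) := by gcongr
    _ = _ := by ring

theorem stmt_12 (a : ℝ) (ha : a ∈ Set.Ioo (-1 : ℝ) 0) (W : ℝ → ℝ) (hW : Continuous W)
    (hlog : LeftLogGrowth W) (Xt : ℝ → ℝ) (hXt : IsSolDelay a W Xt) :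
    (∀ v : ℝ,
      Continuous (fun s => W (s + v)) ∧ LeftLogGrowth (fun s => W (s + v)) ∧
      (∀ Y : ℝ → ℝ, IsSolDelay a (fun s => W (s + v)) Y → ∀ s : ℝ, Xt (s + v) = Y s)) ∧
    (∀ x : ℝ, ∀ Y : ℝ → ℝ, IsSolDelay a (fun s => W s + x) Y → Y = Xt) := by
  refine ⟨fun v => ⟨by fun_prop, hlog.shift hW v, fun Y hY s => (hXt.shift v).unique ha hY s⟩, ?_⟩
  rintro x Y ⟨hYc, hYe, hYb⟩
  have hY : IsSolDelay a W Y := ⟨hYc, fun t s hts => by simpa using hYe t s hts, hYb⟩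
  exact funext fun s => hY.unique ha hXt s
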